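/- Let M > 0, let I ⊆ [−M, 0) satisfy DCC and I' ⊆ [0, ∞) satisfy DCC, and let Λ be a nonempty index set with pairs (α_k, β_k) ∈ I × I' for k ∈ Λ. Define λ = inf { s ≥ 0 : (1 − s)·α_k + s·β_k ≥ 0 for all k ∈ Λ }. Assume λ > 0 and λ < ∞. Then there exists k_0 ∈ Λ with (1 − λ)·α_{k_0} + λ·β_{k_0} = 0. -/

import Mathlib

/-- The nef threshold `λ = inf { s ≥ 0 : (1-s)·α_k + s·β_k ≥ 0 ∀ k }` for
DCC coefficient sets is attained: some index `k₀` satisfies `(1-λ)·α_{k₀} + λ·β_{k₀} = 0`,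
provided `0 < λ` and the defining set is nonempty. -/
theorem stmt_11 (M : ℝ) (hM : 0 < M) (I I' : Set ℝ)
    (hI : I ⊆ Set.Ico (-M) 0) (hI' : I' ⊆ Set.Ici (0 : ℝ))
    (hIdcc : ¬∃ f : ℕ → ℝ, (∀ k, f k ∈ I) ∧ StrictAnti f)
    (hI'dcc : ¬∃ f : ℕ → ℝ, (∀ k, f k ∈ I') ∧ StrictAnti f)
    (Λ : Type*) (hΛ : Nonempty Λ) (α β : Λ → ℝ)
    (hα : ∀ k, α k ∈ I) (hβ : ∀ k, β k ∈ I')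
    (lam : ℝ)
    (hlam : lam = sInf {s : ℝ | 0 ≤ s ∧ ∀ k, 0 ≤ (1 - s) * α k + s * β k})
    (hne : {s : ℝ | 0 ≤ s ∧ ∀ k, 0 ≤ (1 - s) * α k + s * β k}.Nonempty)
    (hpos : 0 < lam) :
    ∃ k₀ : Λ, (1 - lam) * α k₀ + lam * β k₀ = 0 := by
  have hIw : I.IsPWO := by
    apply Set.IsWF.isPWO
    rw [Set.isWF_iff_no_descending_seq]
    intro f hf h
    exact hIdcc ⟨f, h, hf⟩
  have hIw' : I'.IsPWO := by
    apply Set.IsWF.isPWO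
    rw [Set.isWF_iff_no_descending_seq]
    intro f hf h
    exact hI'dcc ⟨f, h, hf⟩
  have hbdd : BddBelow {s : ℝ | 0 ≤ s ∧ ∀ k, 0 ≤ (1 - s) * α k + s * β k} :=
    ⟨0, fun s hs => hs.1⟩
  have hclosed : IsClosed {s : ℝ | 0 ≤ s ∧ ∀ k, 0 ≤ (1 - s) * α k + s * β k} := by
    have he : {s : ℝ | 0 ≤ s ∧ ∀ k, 0 ≤ (1 - s) * α k + s * β k} =
        Set.Ici 0 ∩ ⋂ k, {s : ℝ | 0 ≤ (1 - s) * α k + s * β k} := by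
      ext s
      simp
    rw [he]
    exact isClosed_Ici.inter
      (isClosed_iInter fun k => isClosed_le continuous_const (by fun_prop))
  have hmem := hclosed.csInf_mem hne hbdd
  rw [← hlam] at hmem
  have hle1 : lam ≤ 1 := by
    rw [hlam]
    refine csInf_le hbdd ⟨zero_le_one, fun k => ?_⟩
    have := hI' (hβ k)
    simpa using this
  let s : ℕ → ℝ := fun n => lam - lam * (1 / ((n : ℝ) + 1))
  have hs0 : ∀ n, 0 ≤ s n := by
    intro n
    have h1 : 1 / ((n : ℝ) + 1) ≤ 1 := by
      rw [div_le_one (by positivity)]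
      have : (0 : ℝ) ≤ n := by positivity
      linarith
    have := mul_le_mul_of_nonneg_left h1 hpos.le
    simp only [s]
    linarith
  have hs1 : ∀ n, s n < lam := by
    intro n
    have : 0 < lam * (1 / ((n : ℝ) + 1)) := by positivity
    simp only [s]
    linarith
  have hslim : Filter.Tendsto s Filter.atTop (nhds lam) := by
    have := (tendsto_one_div_add_atTop_nhds_zero_nat (𝕜 := ℝ)).const_mul lam
    simpa [s] using this.const_sub lam
  have hex : ∀ n, ∃ k, (1 - s n) * α k + s n * β k < 0 := by
    intro n
    by_contra! h
    have : lam ≤ s n := by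
      conv_lhs => rw [hlam]
      exact csInf_le hbdd ⟨hs0 n, h⟩
    exact absurd (hs1 n) (not_lt.mpr this)
  choose k hk using hex
  obtain ⟨g, hg⟩ := (hIw.prod hIw').exists_monotone_subseq
    (f := fun n => (α (k n), β (k n))) (fun n => ⟨hα _, hβ _⟩)
  refine ⟨k (g 0), le_antisymm ?_ (hmem.2 _)⟩
  have hlim : Filter.Tendsto (fun n => (1 - s (g n)) * α (k (g 0)) + s (g n) * β (k (g 0)))
      Filter.atTop (nhds ((1 - lam) * α (k (g 0)) + lam * β (k (g 0)))) := by
    have h := hslim.comp g.strictMono.tendsto_atTop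
    exact ((h.const_sub 1).mul_const _).add (h.mul_const _)
  refine le_of_tendsto' hlim fun n => ?_
  have hm := hg (Nat.zero_le n)
  have ha : α (k (g 0)) ≤ α (k (g n)) := hm.1
  have hb : β (k (g 0)) ≤ β (k (g n)) := hm.2
  have h1 : 0 ≤ 1 - s (g n) := by linarith [hs1 (g n)]
  have h2 := mul_le_mul_of_nonneg_left ha h1
  have h3 := mul_le_mul_of_nonneg_left hb (hs0 (g n))
  linarith [hk (g n)]
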